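/- For L odd and u Haar-distributed on CU_Sym(L), the following second-moment identity holds: Σ_{p=0}^{L-1} E_u[ (u†)_{p,k}(u†)_{p,i}(u)_{l,p}(u)_{j,p} ] = (1/L)[ δ_{l,k}δ_{i,j} + δ_{j,k}δ_{l,i} − (1/L)δ_{j−k, i−l} ], where δ is the Kronecker delta on ℤ/Lℤ. -/

import Mathlib

/-!
Write `χ` for the standard additive character of `ℤ/Lℤ`. Expanding the four matrix entries gives
`L⁻⁴ ∑_{a,b,c,d} χ(c(l-p) + d(j-p) - a(k-p) - b(i-p)) E[e^{i(φ_c + φ_d - φ_a - φ_b)}]`.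
The random phase is the character of the torus with frequency vector `N_c + N_d - N_a - N_b`, where
`N_x` (`phaseFreq`) counts the occurrences of each coordinate in `θ_x + θ_{-x}`, so its expectation
is `1` if that vector vanishes and `0` otherwise (`integral_torusChar`). Summing over `p` produces
`L` times the indicator of `a + b = c + d`. Frequency matching alone only determines
`{±a, ±b} = {±c, ±d}`; since `L` is odd, momentum conservation removes the sign ambiguity and leaves
exactly `(c, d) = (a, b)` or `(c, d) = (b, a)` (`phase_match_iff`). Inclusion–exclusion over these
two pairings, which coincide when `a = b`, and orthogonality of `χ` give the three terms
(`sum_pairings`).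
-/

open Matrix Complex MeasureTheory


/-- The `2π`-periodic exponential `t ↦ e^{int}` integrates to `2π` or `0` over a period. -/
lemma integral_exp_int (n : ℤ) :
    ∫ t in Set.Ico (0 : ℝ) (2 * Real.pi), Complex.exp (Complex.I * (n * t))
      = if n = 0 then (2 * Real.pi : ℂ) else 0 := by
  rw [integral_Ico_eq_integral_Ioc, ← intervalIntegral.integral_of_le Real.two_pi_pos.le]
  split_ifs with h
  · simp [h]
  · have hc : Complex.I * (n : ℂ) ≠ 0 := mul_ne_zero Complex.I_ne_zero (by exact_mod_cast h)
    have h1 := integral_exp_mul_complex (a := 0) (b := 2 * Real.pi) hc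
    simp only [mul_assoc] at h1
    rw [h1]
    have h2 : Complex.exp (Complex.I * (n * ((2 * Real.pi : ℝ) : ℂ))) = 1 := by
      rw [Complex.exp_eq_one_iff]
      exact ⟨n, by push_cast; ring⟩
    rw [h2]
    simp

/-- Orthogonality of the characters of the torus `[0, 2π)^ι` under the normalized product measure,
together with their integrability. -/
lemma integral_torusChar {ι : Type*} [Fintype ι] (n : ι → ℤ) (μ : Measure (ι → ℝ))
    (hμ : μ = (ENNReal.ofReal ((2 * Real.pi) ^ Fintype.card ι))⁻¹ •
      (volume.restrict {θ : ι → ℝ | ∀ k, θ k ∈ Set.Ico 0 (2 * Real.pi)})) :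
    Integrable (fun θ : ι → ℝ => ∏ m, Complex.exp (Complex.I * (n m * θ m))) μ ∧
    ∫ θ, ∏ m, Complex.exp (Complex.I * (n m * θ m)) ∂μ = if n = 0 then 1 else 0 := by
  have hset : {θ : ι → ℝ | ∀ k, θ k ∈ Set.Ico 0 (2 * Real.pi)}
      = Set.univ.pi fun _ => Set.Ico 0 (2 * Real.pi) := by
    ext θ; simp [Set.mem_pi]
  rw [hset, volume_pi, Measure.restrict_pi_pi] at hμ
  have hpos : (0 : ℝ) < (2 * Real.pi) ^ Fintype.card ι := pow_pos Real.two_pi_pos _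
  have hpi : (2 * Real.pi : ℂ) ≠ 0 := by
    exact_mod_cast Real.two_pi_pos.ne'
  subst hμ
  constructor
  · refine Integrable.smul_measure ?_ (by simp [hpos])
    refine Integrable.fintype_prod (𝕜 := ℂ)
      (f := fun m (t : ℝ) => Complex.exp (Complex.I * (n m * t))) fun m => ?_
    have hc : Continuous fun t : ℝ => Complex.exp (Complex.I * (n m * t)) := by fun_prop
    exact (hc.integrableOn_Icc (a := 0) (b := 2 * Real.pi)).mono_set Set.Ico_subset_Icc_self
  · rw [integral_smul_measure, integral_fintype_prod_eq_prod
      (f := fun m (t : ℝ) => Complex.exp (Complex.I * (n m * t)))]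
    simp only [integral_exp_int]
    split_ifs with h
    · subst h
      rw [ENNReal.toReal_inv, ENNReal.toReal_ofReal hpos.le]
      simp only [Pi.zero_apply, if_true, Finset.prod_const, Finset.card_univ, Complex.real_smul]
      push_cast
      exact inv_mul_cancel₀ (pow_ne_zero _ hpi)
    · obtain ⟨m, hm⟩ := Function.ne_iff.mp h
      rw [Finset.prod_eq_zero (Finset.mem_univ m), smul_zero]
      exact if_neg hm

/-- The frequency vector of the phase `φ_x = θ_x + θ_{-x}`: the coordinate `m` occurs
`phaseFreq x m` times. -/
def phaseFreq {L : ℕ} (x m : ZMod L) : ℤ := (if x = m then 1 else 0) + (if -x = m then 1 else 0)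

lemma phaseFreq_neg {L : ℕ} (x : ZMod L) : phaseFreq (-x) = phaseFreq x := by
  funext m
  simp [phaseFreq, add_comm]

lemma phaseFreq_nonneg {L : ℕ} (x m : ZMod L) : 0 ≤ phaseFreq x m := by
  unfold phaseFreq; split_ifs <;> norm_num

lemma phaseFreq_self_pos {L : ℕ} (x : ZMod L) : 0 < phaseFreq x x := by
  unfold phaseFreq; split_ifs <;> simp_all

lemma eq_or_neg_of_phaseFreq_pos {L : ℕ} {x m : ZMod L} (h : 0 < phaseFreq x m) :
    x = m ∨ x = -m := by
  by_contra! hc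
  have : -x ≠ m := fun h' => hc.2 (by rw [← h', neg_neg])
  simp [phaseFreq, hc.1, this] at h

lemma prod_exp_phaseFreq {L : ℕ} [NeZero L] (a b c d : ZMod L) (θ : ZMod L → ℝ) :
    ∏ m, Complex.exp (Complex.I *
        (((phaseFreq c + phaseFreq d - phaseFreq a - phaseFreq b) m : ℤ) * θ m))
      = starRingEnd ℂ (Complex.exp (Complex.I * (θ a + θ (-a)))) *
        starRingEnd ℂ (Complex.exp (Complex.I * (θ b + θ (-b)))) *
        Complex.exp (Complex.I * (θ c + θ (-c))) * Complex.exp (Complex.I * (θ d + θ (-d))) := by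
  have key : ∀ x : ZMod L, ∑ m, (phaseFreq x m : ℂ) * θ m = θ x + θ (-x) := by
    intro x
    simp [phaseFreq, add_mul, Finset.sum_add_distrib]
  simp only [← Complex.exp_conj, ← Complex.exp_add, ← Complex.exp_sum, ← Finset.mul_sum, map_mul,
    map_add, Complex.conj_I, Complex.conj_ofReal]
  congr 1
  simp only [Pi.add_apply, Pi.sub_apply, Int.cast_sub, Int.cast_add, sub_mul, add_mul,
    Finset.sum_sub_distrib, Finset.sum_add_distrib, key]
  ring

/-- Doubling is injective on `ℤ/Lℤ` for odd `L`. -/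
lemma eq_of_two_mul_eq {L : ℕ} (hL : Odd L) {x y : ZMod L} (h : 2 * x = 2 * y) : x = y := by
  have h2 : IsUnit (2 : ZMod L) := by
    have := (ZMod.isUnit_iff_coprime 2 L).mpr (Nat.coprime_two_left.mpr hL)
    exact_mod_cast this
  exact h2.mul_left_cancel h

/-- If the frequencies match with `c = ±a`, then also `d = ±b`, and oddness of `L` resolves the
signs. -/
lemma phase_match_aux {L : ℕ} (hL : Odd L) {a b c d : ZMod L} (hca : c = a ∨ c = -a)
    (hn : phaseFreq c + phaseFreq d = phaseFreq a + phaseFreq b) (hs : a + b = c + d) :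
    (c = a ∧ d = b) ∨ (c = b ∧ d = a) := by
  have hN : phaseFreq c = phaseFreq a := by
    rcases hca with rfl | rfl
    · rfl
    · exact phaseFreq_neg a
  have hdb : d = b ∨ d = -b := by
    rw [hN] at hn
    exact eq_or_neg_of_phaseFreq_pos (by rw [add_left_cancel hn]; exact phaseFreq_self_pos b)
  rcases hca with rfl | rfl
  · exact Or.inl ⟨rfl, (add_left_cancel hs).symm⟩
  · rcases hdb with rfl | rfl
    · exact Or.inl ⟨(add_right_cancel hs).symm, rfl⟩
    · have : a = -b := eq_of_two_mul_eq hL (by linear_combination hs)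
      right
      subst this
      simp

/-- Frequency matching together with momentum conservation leaves only the two Wick pairings. -/
lemma phase_match_iff {L : ℕ} (hL : Odd L) (a b c d : ZMod L) :
    (phaseFreq c + phaseFreq d - phaseFreq a - phaseFreq b = 0 ∧ a + b - c - d = 0) ↔
      (c = a ∧ d = b) ∨ (c = b ∧ d = a) := by
  constructor
  · rintro ⟨hn, hs⟩
    have hn' : phaseFreq c + phaseFreq d = phaseFreq a + phaseFreq b := by
      rw [sub_sub, sub_eq_zero] at hn; exact hn
    have hs' : a + b = c + d := by linear_combination hs
    have hpos : 0 < phaseFreq c a ∨ 0 < phaseFreq d a := by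
      have h1 := congrFun hn' a
      simp only [Pi.add_apply] at h1
      have h2 := phaseFreq_self_pos a
      have h3 := phaseFreq_nonneg b a
      by_contra! h
      linarith [h.1, h.2]
    rcases hpos with h | h
    · exact phase_match_aux hL (eq_or_neg_of_phaseFreq_pos h) hn' hs'
    · have := phase_match_aux hL (c := d) (d := c) (eq_or_neg_of_phaseFreq_pos h)
        (by rw [add_comm, hn']) (by rw [hs', add_comm])
      tauto
  · rintro (⟨rfl, rfl⟩ | ⟨rfl, rfl⟩)
    · exact ⟨by abel, by ring⟩
    · exact ⟨by abel, by ring⟩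

lemma sum_stdAddChar_mul {L : ℕ} [NeZero L] (y : ZMod L) :
    ∑ x : ZMod L, ZMod.stdAddChar (x * y) = if y = 0 then (L : ℂ) else 0 := by
  have := AddChar.sum_mulShift y (ZMod.isPrimitive_stdAddChar L)
  simpa [ZMod.card] using this

/-- The sum over the surviving pairings `(c, d) = (a, b)` and `(c, d) = (b, a)`, by
inclusion–exclusion: the diagonal `a = b` is common to both. -/
lemma sum_pairings {L : ℕ} [NeZero L] (k i l j : ZMod L) :
    ∑ a : ZMod L, ∑ b : ZMod L, ∑ c : ZMod L, ∑ d : ZMod L,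
        ZMod.stdAddChar (c * l + d * j - a * k - b * i) *
          (if (c = a ∧ d = b) ∨ (c = b ∧ d = a) then (1 : ℂ) else 0)
      = (L : ℂ) ^ 2 * ((if l = k then 1 else 0) * (if i = j then 1 else 0))
        + (L : ℂ) ^ 2 * ((if j = k then 1 else 0) * (if l = i then 1 else 0))
        - (L : ℂ) * (if j - k = i - l then 1 else 0) := by
  have hind : ∀ a b c d : ZMod L,
      (if (c = a ∧ d = b) ∨ (c = b ∧ d = a) then (1 : ℂ) else 0)
        = (if c = a then 1 else 0) * (if d = b then 1 else 0)
          + (if c = b then 1 else 0) * (if d = a then 1 else 0)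
          - (if c = a then 1 else 0) * (if d = a then 1 else 0) * (if b = a then 1 else 0) := by
    intro a b c d
    split_ifs <;> simp_all
  have hprod : ∀ y z : ZMod L, ∑ a : ZMod L, ∑ b : ZMod L, ZMod.stdAddChar (a * y + b * z)
      = (if y = 0 then (L : ℂ) else 0) * (if z = 0 then (L : ℂ) else 0) := by
    intro y z
    simp only [AddChar.map_add_eq_mul, ← Finset.mul_sum, ← Finset.sum_mul, sum_stdAddChar_mul]
  have h1 := hprod (l - k) (j - i)
  have h2 := hprod (j - k) (l - i)
  have h3 := sum_stdAddChar_mul (l + j - k - i)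
  have e1 : ∀ a b : ZMod L, a * l + b * j - a * k - b * i = a * (l - k) + b * (j - i) := by
    intros; ring
  have e2 : ∀ a b : ZMod L, b * l + a * j - a * k - b * i = a * (j - k) + b * (l - i) := by
    intros; ring
  have e3 : ∀ a : ZMod L, a * l + a * j - a * k - a * i = a * (l + j - k - i) := by
    intros; ring
  simp only [hind, mul_add, mul_sub, Finset.sum_add_distrib, Finset.sum_sub_distrib]
  have s1 : ∑ a : ZMod L, ∑ b : ZMod L, ∑ c : ZMod L, ∑ d : ZMod L,
      ZMod.stdAddChar (c * l + d * j - a * k - b * i) *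
        ((if c = a then (1 : ℂ) else 0) * (if d = b then 1 else 0))
      = ∑ a : ZMod L, ∑ b : ZMod L, ZMod.stdAddChar (a * (l - k) + b * (j - i)) := by
    simp [e1]
  have s2 : ∑ a : ZMod L, ∑ b : ZMod L, ∑ c : ZMod L, ∑ d : ZMod L,
      ZMod.stdAddChar (c * l + d * j - a * k - b * i) *
        ((if c = b then (1 : ℂ) else 0) * (if d = a then 1 else 0))
      = ∑ a : ZMod L, ∑ b : ZMod L, ZMod.stdAddChar (a * (j - k) + b * (l - i)) := by
    simp [e2]
  have s3 : ∑ a : ZMod L, ∑ b : ZMod L, ∑ c : ZMod L, ∑ d : ZMod L,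
      ZMod.stdAddChar (c * l + d * j - a * k - b * i) *
        ((if c = a then (1 : ℂ) else 0) * (if d = a then 1 else 0) * (if b = a then 1 else 0))
      = ∑ a : ZMod L, ZMod.stdAddChar (a * (l + j - k - i)) := by
    simp [e3]
  rw [s1, s2, s3, h1, h2, h3]
  have c1 : j - i = 0 ↔ i = j := by rw [sub_eq_zero, eq_comm]
  have c2 : l + j - k - i = 0 ↔ j - k = i - l := by
    rw [← sub_eq_zero (a := j - k)]
    exact Eq.congr_left (by ring)
  simp only [c1, c2, sub_eq_zero (a := l), sub_eq_zero (a := j) (b := k)]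
  split_ifs <;> ring

/-- For `L` odd and `u` Haar-distributed on `CU_Sym(L)` — parametrized as
`u = Σ_k e^{iφ_k} v^{(k)}(v^{(k)})†` with symmetric phases `φ_k = θ_k + θ_{-k}` for `θ`
i.i.d. uniform on `[0,2π)` — the second-moment identity
`Σ_p E[(u†)_{p,k}(u†)_{p,i} u_{l,p} u_{j,p}]
  = (1/L)(δ_{l,k}δ_{i,j} + δ_{j,k}δ_{l,i} − (1/L)δ_{j−k,i−l})` holds (deltas mod `L`). -/
theorem second_moment_CUSym (L : ℕ) [NeZero L] (hL : Odd L)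
    (μ : Measure (ZMod L → ℝ))
    (hμ : μ = (ENNReal.ofReal ((2 * Real.pi) ^ L))⁻¹ •
      (volume.restrict {θ : ZMod L → ℝ | ∀ k : ZMod L, θ k ∈ Set.Ico 0 (2 * Real.pi)}))
    (u : (ZMod L → ℝ) → Matrix (ZMod L) (ZMod L) ℂ)
    (hu : ∀ θ a b, u θ a b = (1 / L : ℂ) *
      ∑ k : ZMod L, Complex.exp (Complex.I * (θ k + θ (-k))) *
        Complex.exp (2 * Real.pi * Complex.I * ((k.val : ℕ) * ((a - b).val : ℕ)) / L))
    (k i l j : ZMod L) :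
    ∑ p : ZMod L, ∫ θ, starRingEnd ℂ (u θ k p) * starRingEnd ℂ (u θ i p) *
        u θ l p * u θ j p ∂μ
      = (1 / L : ℂ) *
        ((if l = k then 1 else 0) * (if i = j then 1 else 0)
          + (if j = k then 1 else 0) * (if l = i then 1 else 0)
          - (1 / L : ℂ) * (if j - k = i - l then 1 else 0)) := by
  have hL0 : (L : ℂ) ≠ 0 := Nat.cast_ne_zero.mpr (NeZero.ne L)
  have hchar : ∀ x y : ZMod L,
      Complex.exp (2 * Real.pi * Complex.I * ((x.val : ℕ) * (y.val : ℕ)) / L)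
        = ZMod.stdAddChar (x * y) := by
    intro x y
    have := ZMod.stdAddChar_coe (N := L) ((x.val : ℤ) * (y.val : ℤ))
    push_cast at this
    rw [ZMod.natCast_zmod_val, ZMod.natCast_zmod_val] at this
    exact this.symm
  have hconj : ∀ x : ZMod L, starRingEnd ℂ (ZMod.stdAddChar x : ℂ) = ZMod.stdAddChar (-x) :=
    fun x => (AddChar.map_neg_eq_conj _ x).symm
  have hE : ∀ a b c d : ZMod L, _ := fun a b c d =>
    integral_torusChar (phaseFreq c + phaseFreq d - phaseFreq a - phaseFreq b) μ
      (by rw [ZMod.card]; exact hμ)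
  simp only [prod_exp_phaseFreq] at hE
  have hexp : ∀ (p : ZMod L) (θ : ZMod L → ℝ),
      starRingEnd ℂ (u θ k p) * starRingEnd ℂ (u θ i p) * u θ l p * u θ j p
        = ∑ a : ZMod L, ∑ b : ZMod L, ∑ c : ZMod L, ∑ d : ZMod L,
          ((1 / L : ℂ) ^ 4 * (ZMod.stdAddChar (c * l + d * j - a * k - b * i) *
              ZMod.stdAddChar (p * (a + b - c - d)))) *
            (starRingEnd ℂ (Complex.exp (Complex.I * (θ a + θ (-a)))) *
              starRingEnd ℂ (Complex.exp (Complex.I * (θ b + θ (-b)))) *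
              Complex.exp (Complex.I * (θ c + θ (-c))) *
              Complex.exp (Complex.I * (θ d + θ (-d)))) := by
    intro p θ
    have hfac : ∀ a b c d : ZMod L,
        (ZMod.stdAddChar (c * l + d * j - a * k - b * i) *
          ZMod.stdAddChar (p * (a + b - c - d)) : ℂ)
        = ZMod.stdAddChar (-(a * (k - p))) * ZMod.stdAddChar (-(b * (i - p))) *
          ZMod.stdAddChar (c * (l - p)) * ZMod.stdAddChar (d * (j - p)) := by
      intro a b c d
      simp only [← AddChar.map_add_eq_mul]
      congr 1
      ring
    have hcL : starRingEnd ℂ (1 / L : ℂ) = 1 / L := by simp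
    simp only [hfac, hu, hchar, map_mul, map_sum, hconj, hcL]
    have h4 : ∀ A B C D : ZMod L → ℂ,
        (1 / L * ∑ a, A a) * (1 / L * ∑ b, B b) * (1 / L * ∑ c, C c) * (1 / L * ∑ d, D d)
          = ∑ a, ∑ b, ∑ c, ∑ d, (1 / L : ℂ) ^ 4 * (A a * B b * C c * D d) := by
      intro A B C D
      simp only [← Finset.mul_sum, ← Finset.sum_mul]
      ring
    rw [h4]
    refine Finset.sum_congr rfl fun a _ => Finset.sum_congr rfl fun b _ =>
      Finset.sum_congr rfl fun c _ => Finset.sum_congr rfl fun d _ => ?_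
    ring
  have hint : ∀ p : ZMod L,
      ∫ θ, starRingEnd ℂ (u θ k p) * starRingEnd ℂ (u θ i p) * u θ l p * u θ j p ∂μ
        = ∑ a : ZMod L, ∑ b : ZMod L, ∑ c : ZMod L, ∑ d : ZMod L,
          ((1 / L : ℂ) ^ 4 * (ZMod.stdAddChar (c * l + d * j - a * k - b * i) *
              ZMod.stdAddChar (p * (a + b - c - d)))) *
            (if phaseFreq c + phaseFreq d - phaseFreq a - phaseFreq b = 0 then 1 else 0) := by
    intro p
    have hI := fun a b c d => (hE a b c d).1.const_mul
      ((1 / L : ℂ) ^ 4 * (ZMod.stdAddChar (c * l + d * j - a * k - b * i) *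
              ZMod.stdAddChar (p * (a + b - c - d))))
    simp only [hexp]
    rw [integral_finsetSum _ fun a _ => integrable_finsetSum _ fun b _ =>
      integrable_finsetSum _ fun c _ => integrable_finsetSum _ fun d _ => hI a b c d]
    refine Finset.sum_congr rfl fun a _ => ?_
    rw [integral_finsetSum _ fun b _ =>
      integrable_finsetSum _ fun c _ => integrable_finsetSum _ fun d _ => hI a b c d]
    refine Finset.sum_congr rfl fun b _ => ?_
    rw [integral_finsetSum _ fun c _ => integrable_finsetSum _ fun d _ => hI a b c d]
    refine Finset.sum_congr rfl fun c _ => ?_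
    rw [integral_finsetSum _ fun d _ => hI a b c d]
    refine Finset.sum_congr rfl fun d _ => ?_
    rw [integral_const_mul, (hE a b c d).2]
  -- Summing over `p` first turns momentum conservation into an indicator with weight `L`.
  have hsum : ∀ a b c d : ZMod L, ∑ p : ZMod L,
      ((1 / L : ℂ) ^ 4 * (ZMod.stdAddChar (c * l + d * j - a * k - b * i) *
          ZMod.stdAddChar (p * (a + b - c - d)))) *
        (if phaseFreq c + phaseFreq d - phaseFreq a - phaseFreq b = 0 then 1 else 0)
      = (1 / L : ℂ) ^ 3 * (ZMod.stdAddChar (c * l + d * j - a * k - b * i) *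
          (if (c = a ∧ d = b) ∨ (c = b ∧ d = a) then (1 : ℂ) else 0)) := by
    intro a b c d
    rw [← Finset.sum_mul, ← Finset.mul_sum, ← Finset.mul_sum, sum_stdAddChar_mul]
    simp only [← phase_match_iff hL a b c d, ite_and]
    split_ifs
    · field_simp
    all_goals simp
  simp only [hint]
  rw [Finset.sum_comm]
  have hswap : ∀ f : ZMod L → ZMod L → ZMod L → ZMod L → ZMod L → ℂ,
      ∑ a, ∑ p, ∑ b, ∑ c, ∑ d, f p a b c d = ∑ a, ∑ b, ∑ c, ∑ d, ∑ p, f p a b c d := by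
    intro f
    refine Finset.sum_congr rfl fun a _ => ?_
    rw [Finset.sum_comm]
    refine Finset.sum_congr rfl fun b _ => ?_
    rw [Finset.sum_comm]
    exact Finset.sum_congr rfl fun c _ => Finset.sum_comm
  rw [hswap]
  simp only [hsum]
  simp only [← Finset.mul_sum, sum_pairings]
  field_simp
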